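/- There exists a sequence (G_k)_{k≥2} of finite transitive imprimitive permutation groups, with G_k acting on a set T_k of size n_k, together with nontrivial block partitions 𝓑_k for G_k, such that |G_k| → ∞ and the ratio |U_{G_k⋌𝓑_k}| / |G_k| converges to 1 as k → ∞. For example, one may take G_k ≤ S_{k²} generated by the k disjoint k-cycles (1+ℓk, 2+ℓk, …, k+ℓk) for ℓ = 0,…,k−1 together with a permutation inducing a transitive action on the block partition 𝓑_k := {{1+ℓk, …, k+ℓk} : ℓ = 0,…,k−1}. -/

import Mathlib

/-!
A restriction `θ|_B` determines `θ` up to the pointwise stabilizer `G_(B)`, so `G|_B` has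
`[G : G_(B)]` elements. When `G` is transitive and `𝓑` is the orbit of a block `B`, this index is
the same for all members of `𝓑`, so `⋃_μ D^μ` has `[G : G_(B)] * n` points and
`|U_{G⋌𝓑}| = |G| + ([G : G_(B)] + 3) * n`.

For `G = ℤ_m ≀ ℤ_m` on `m²` points, generated by `m` disjoint `m`-cycles and a permutation that
rotates their supports, `θ|_B` is given by the image of the block `B` and one rotation of it.
The index is therefore `m²`, whereas `|G| = m^(m+1)`.
-/

/-- The set of restrictions `θ|_B` (as functions `B → Fin n`) of elements `θ ∈ G`
to blocks `B ∈ 𝓑`, i.e. `⋃_{B ∈ 𝓑} G|_B`. -/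
def Restr (n : ℕ) (G : Subgroup (Equiv.Perm (Fin n))) (𝓑 : Set (Set (Fin n))) :
    Set ((B : Set (Fin n)) × (B → Fin n)) :=
  { p | p.1 ∈ 𝓑 ∧ ∃ θ ∈ G, p.2 = fun x => θ x.1 }

/-- The underlying set of the ordered set `U_{G⋌𝓑}`:
the fence `F = {ℓ_1,u_1,…,ℓ_n,u_n}` (constructors `low`, `up`), the copy of `G`
(constructor `grp`), the sets `D^μ = dom(μ) × {μ}` (constructor `cell`), and the
copy of `T = {1,…,n}` (constructor `pt`). -/
inductive UPt (n : ℕ) (G : Subgroup (Equiv.Perm (Fin n))) (𝓑 : Set (Set (Fin n))) where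
  | low : Fin n → UPt n G 𝓑
  | up : Fin n → UPt n G 𝓑
  | grp : G → UPt n G 𝓑
  | cell : (μ : Restr n G 𝓑) → (j : μ.1.1) → UPt n G 𝓑
  | pt : Fin n → UPt n G 𝓑

/-- The generating strict comparabilities of `U_{G⋌𝓑}`:
`ℓ_i < u_i`, `ℓ_{i+1} < u_i`, `u_j < (j,μ)`, `(j,μ) < μ(j)`, and `θ < (j, θ|_B)`. -/
inductive UStep (n : ℕ) (G : Subgroup (Equiv.Perm (Fin n))) (𝓑 : Set (Set (Fin n))) :
    UPt n G 𝓑 → UPt n G 𝓑 → Prop where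
  | fence_eq (i : Fin n) : UStep n G 𝓑 (.low i) (.up i)
  | fence_succ (i j : Fin n) (h : (j : ℕ) = (i : ℕ) + 1) : UStep n G 𝓑 (.low j) (.up i)
  | up_cell (μ : Restr n G 𝓑) (j : μ.1.1) : UStep n G 𝓑 (.up j.1) (.cell μ j)
  | cell_pt (μ : Restr n G 𝓑) (j : μ.1.1) : UStep n G 𝓑 (.cell μ j) (.pt (μ.1.2 j))
  | grp_cell (θ : G) (μ : Restr n G 𝓑) (j : μ.1.1)
      (h : ∀ x : μ.1.1, μ.1.2 x = (θ : Equiv.Perm (Fin n)) x.1) :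
      UStep n G 𝓑 (.grp θ) (.cell μ j)

/-- Rank function used to prove antisymmetry of the generated order. -/
def UPt.rank {n : ℕ} {G : Subgroup (Equiv.Perm (Fin n))} {𝓑 : Set (Set (Fin n))} :
    UPt n G 𝓑 → ℕ
  | .low _ => 0
  | .grp _ => 0
  | .up _ => 1
  | .cell _ _ => 2
  | .pt _ => 3

theorem UStep.rank_lt {n : ℕ} {G : Subgroup (Equiv.Perm (Fin n))} {𝓑 : Set (Set (Fin n))}
    {x y : UPt n G 𝓑} (h : UStep n G 𝓑 x y) : x.rank < y.rank := by
  cases h <;> simp [UPt.rank]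

/-- The order of `U_{G⋌𝓑}`: the reflexive-transitive closure of the generating
comparabilities. -/
instance UPt.instPartialOrder (n : ℕ) (G : Subgroup (Equiv.Perm (Fin n)))
    (𝓑 : Set (Set (Fin n))) : PartialOrder (UPt n G 𝓑) where
  le := Relation.ReflTransGen (UStep n G 𝓑)
  le_refl _ := Relation.ReflTransGen.refl
  le_trans _ _ _ := Relation.ReflTransGen.trans
  le_antisymm a b hab hba := by
    have mono : ∀ {x y : UPt n G 𝓑}, Relation.ReflTransGen (UStep n G 𝓑) x y →
        x.rank ≤ y.rank := by
      intro x y h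
      induction h with
      | refl => exact le_rfl
      | tail _ h2 ih => exact ih.trans h2.rank_lt.le
    rcases hab.cases_head with h | ⟨c, hc, hcb⟩
    · exact h
    rcases hba.cases_head with h | ⟨d, hd, hda⟩
    · exact h.symm
    have h1 := hc.rank_lt
    have h2 := mono hcb
    have h3 := hd.rank_lt
    have h4 := mono hda
    omega

/-- `B` is a block for `G`: for every `σ ∈ G`, `σ[B] ∩ B ≠ ∅` implies `σ[B] = B`. -/
def IsBlockOf (n : ℕ) (G : Subgroup (Equiv.Perm (Fin n))) (B : Set (Fin n)) : Prop :=
  ∀ σ ∈ G, ((σ : Equiv.Perm (Fin n)) '' B ∩ B).Nonempty → (σ : Equiv.Perm (Fin n)) '' B = B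

/-- A block partition `𝓑 = ⋃_{j=1}^ℓ G·B_j` for `G` with orbit cut `{B_1,…,B_ℓ}`
(the `B_j` are the `cut j`): the `B_j` are nonempty blocks, the family of all images
`σ[B_i]` (`σ ∈ G`) partitions `{1,…,n}`, and distinct members of the orbit cut lie in
distinct `G`-orbits of blocks. -/
structure BlockPartition (n : ℕ) (G : Subgroup (Equiv.Perm (Fin n))) where
  ℓ : ℕ
  cut : Fin ℓ → Set (Fin n)
  nonempty_cut : ∀ i, (cut i).Nonempty
  isBlock_cut : ∀ i, IsBlockOf n G (cut i)
  partitions : ∀ x : Fin n,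
    ∃! C : Set (Fin n), (∃ i, ∃ σ ∈ G, (σ : Equiv.Perm (Fin n)) '' cut i = C) ∧ x ∈ C
  cut_distinct_orbits : ∀ i j : Fin ℓ, ∀ σ ∈ G,
    (σ : Equiv.Perm (Fin n)) '' cut i = cut j → i = j

/-- The block partition `𝓑 = ⋃_{j=1}^ℓ G·B_j` as a set of subsets of `{1,…,n}`. -/
def BlockPartition.blocks {n : ℕ} {G : Subgroup (Equiv.Perm (Fin n))}
    (P : BlockPartition n G) : Set (Set (Fin n)) :=
  { C | ∃ i, ∃ σ ∈ G, (σ : Equiv.Perm (Fin n)) '' P.cut i = C }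

/-- Composition `σ ∘ μ` of a restriction `μ = θ|_B` with `σ ∈ G`; this is the
restriction `(σθ)|_B`. -/
def Restr.comp {n : ℕ} {G : Subgroup (Equiv.Perm (Fin n))} {𝓑 : Set (Set (Fin n))}
    (σ : G) (μ : Restr n G 𝓑) : Restr n G 𝓑 :=
  ⟨⟨μ.1.1, fun x => (σ : Equiv.Perm (Fin n)) (μ.1.2 x)⟩, by
    obtain ⟨hB, θ, hθ, hf⟩ := μ.2
    refine ⟨hB, (σ : Equiv.Perm (Fin n)) * θ, mul_mem σ.2 hθ, ?_⟩
    funext x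
    simp [hf]⟩

section Restrictions

open MulAction Pointwise

variable {M N X Y : Type*} [Group M] [Group N] [MulAction M X] [MulAction N Y]

/-- The set `M|_B` of the maps `B → X` induced by the elements of `M`. -/
def restrictions (M : Type*) {X : Type*} [SMul M X] (B : Set X) : Set (B → X) :=
  Set.range fun (g : M) (x : B) => g • (x : X)

theorem index_eq_card_range {β : Type*} {K : Subgroup M} {f : M → β}
    (hf : ∀ a b, f a = f b ↔ a⁻¹ * b ∈ K) : K.index = Nat.card (Set.range f) := by
  have hker : QuotientGroup.leftRel K = Setoid.ker f :=
    Setoid.ext fun a b => QuotientGroup.leftRel_apply.trans (hf a b).symm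
  exact Nat.card_congr ((Quotient.congrRight (Setoid.ext_iff.1 hker)).trans
    (Setoid.quotientKerEquivRange f))

theorem inv_mul_mem_fixingSubgroup_iff {B : Set X} {a b : M} :
    a⁻¹ * b ∈ fixingSubgroup M B ↔ ∀ x ∈ B, a • x = b • x := by
  simp only [mem_fixingSubgroup_iff, mul_smul, inv_smul_eq_iff]
  exact forall₂_congr fun _ _ => eq_comm

theorem card_restrictions (B : Set X) :
    Nat.card (restrictions M B) = (fixingSubgroup M B).index := by
  refine (index_eq_card_range fun a b => ?_).symm
  rw [inv_mul_mem_fixingSubgroup_iff, funext_iff, Subtype.forall]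

theorem index_fixingSubgroup_smul (g : M) (B : Set X) :
    (fixingSubgroup M (g • B)).index = (fixingSubgroup M B).index := by
  rw [SubMulAction.fixingSubgroup_smul_eq_fixingSubgroup_map_conj]
  exact Subgroup.index_map_equiv _ (MulAut.conj g)

theorem index_fixingSubgroup_image {φ : M →* N} (j : X →ₑ[φ] Y) (hφ : Function.Surjective φ)
    (hj : Function.Injective j) (B : Set X) :
    (fixingSubgroup N (j '' B)).index = (fixingSubgroup M B).index := by
  have hcomap : (fixingSubgroup N (j '' B)).comap φ = fixingSubgroup M B := by
    ext g
    simp [mem_fixingSubgroup_iff, ← map_smulₛₗ, hj.eq_iff]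
  rw [← hcomap, Subgroup.index_comap_of_surjective _ hφ]

end Restrictions

section Counting

variable {n : ℕ} {G : Subgroup (Equiv.Perm (Fin n))} {𝓑 : Set (Set (Fin n))}

/-- The decomposition of `U_{G⋌𝓑}` into `G`, the union of the `D^μ` (grouped by the domain `B` of
`μ`), the lower and the upper half of the fence, and `T`. -/
def UPt.equivSum :
    UPt n G 𝓑 ≃ G ⊕ ((B : 𝓑) × restrictions G (B : Set (Fin n)) × B) ⊕ Fin n ⊕ Fin n ⊕ Fin n where
  toFun
    | .grp θ => .inl θ
    | .cell μ j => .inr (.inl ⟨⟨μ.1.1, μ.2.1⟩, ⟨μ.1.2,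
        let ⟨θ, hθ, hμ⟩ := μ.2.2; ⟨⟨θ, hθ⟩, hμ.symm⟩⟩, j⟩)
    | .low i => .inr (.inr (.inl i))
    | .up i => .inr (.inr (.inr (.inl i)))
    | .pt i => .inr (.inr (.inr (.inr i)))
  invFun
    | .inl θ => .grp θ
    | .inr (.inl ⟨B, μ, j⟩) => .cell ⟨⟨B, μ⟩, B.2, let ⟨θ, hμ⟩ := μ.2; ⟨θ, θ.2, hμ.symm⟩⟩ j
    | .inr (.inr (.inl i)) => .low i
    | .inr (.inr (.inr (.inl i))) => .up i
    | .inr (.inr (.inr (.inr i))) => .pt i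
  left_inv := by rintro (_ | _ | _ | _ | _) <;> rfl
  right_inv := by rintro (_ | _ | _ | _ | _) <;> rfl

theorem card_sigma_prod_of_isPartition {α : Type*} [Finite α] {c : Set (Set α)}
    (hc : Setoid.IsPartition c) {R : c → Type*} [∀ B, Finite (R B)] {r : ℕ}
    (hR : ∀ B, Nat.card (R B) = r) :
    Nat.card ((B : c) × R B × B) = r * Nat.card α := by
  have := Fintype.ofFinite c
  have hsum : ∑ B : c, Nat.card B = Nat.card α := by
    simpa [finsum_eq_sum_of_fintype] using (hc.ncard_eq_finsum Set.univ).symm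
  simp only [Nat.card_sigma, Nat.card_prod, hR, ← Finset.mul_sum, hsum]

theorem UPt.card_of_isPartition (h𝓑 : Setoid.IsPartition 𝓑) {r : ℕ}
    (hr : ∀ B ∈ 𝓑, (fixingSubgroup G B).index = r) :
    Nat.card (UPt n G 𝓑) = Nat.card G + (r + 3) * n := by
  have hcells : Nat.card ((B : 𝓑) × restrictions G (B : Set (Fin n)) × B) = r * n := by
    simpa using card_sigma_prod_of_isPartition h𝓑
      (R := fun B => restrictions G (B : Set (Fin n)))
      fun B => (card_restrictions (B : Set (Fin n))).trans (hr B B.2)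
  simp only [Nat.card_congr UPt.equivSum, Nat.card_sum, hcells, Nat.card_fin]
  ring

end Counting

section OrbitOfBlock

open MulAction Pointwise

variable {n : ℕ} {G : Subgroup (Equiv.Perm (Fin n))} {B : Set (Fin n)}

theorem IsBlockOf.of_isBlock (hB : IsBlock G B) : IsBlockOf n G B := fun σ hσ hne =>
  isBlock_iff_smul_eq_of_nonempty.1 hB (g := ⟨σ, hσ⟩) hne

variable [IsPretransitive G (Fin n)]

/-- The block partition `G·B` of a transitive group `G`, with orbit cut `{B}`. -/
def BlockPartition.ofIsBlock (hB : IsBlock G B) (hne : B.Nonempty) : BlockPartition n G where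
  ℓ := 1
  cut _ := B
  nonempty_cut _ := hne
  isBlock_cut _ := .of_isBlock hB
  partitions x := by simpa [← Set.image_smul] using (hB.isBlockSystem hne).1.2 x
  cut_distinct_orbits i j _ _ _ := Subsingleton.elim i j

theorem BlockPartition.blocks_ofIsBlock (hB : IsBlock G B) (hne : B.Nonempty) :
    (BlockPartition.ofIsBlock hB hne).blocks = Set.range fun g : G => g • B := by
  ext C
  simp [blocks, ofIsBlock, ← Set.image_smul]

theorem BlockPartition.mem_blocks_ofIsBlock (hB : IsBlock G B) (hne : B.Nonempty) :
    B ∈ (BlockPartition.ofIsBlock hB hne).blocks := by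
  rw [blocks_ofIsBlock]
  exact ⟨1, one_smul G B⟩

theorem UPt.card_of_isBlock (hB : IsBlock G B) (hne : B.Nonempty) :
    Nat.card (UPt n G (BlockPartition.ofIsBlock hB hne).blocks) =
      Nat.card G + ((fixingSubgroup G B).index + 3) * n := by
  rw [BlockPartition.blocks_ofIsBlock]
  refine UPt.card_of_isPartition (hB.isBlockSystem hne).1 ?_
  rintro _ ⟨g, rfl⟩
  exact index_fixingSubgroup_smul g B

end OrbitOfBlock

section PermImage

open MulAction

variable (W : Type*) {X α : Type*} [Group W] [MulAction W X] (e : X ≃ α)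

/-- The permutation group induced on `α` by an action of `W` on `X`, where `e` labels the points
of `X` by the elements of `α`. -/
def permImage : Subgroup (Equiv.Perm α) :=
  (e.permCongrHom.toMonoidHom.comp (toPermHom W X)).range

/-- The labelling `e` as an equivariant map from the action of `W` to that of `permImage W e`. -/
def permImageHom : X →ₑ[(e.permCongrHom.toMonoidHom.comp (toPermHom W X)).rangeRestrict] α where
  toFun := e
  map_smul' w x := congrArg (fun y => e (w • y)) (e.symm_apply_apply x).symm

theorem card_permImage [FaithfulSMul W X] : Nat.card (permImage W e) = Nat.card W :=
  (Nat.card_congr (MonoidHom.ofInjective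
    (e.permCongrHom.injective.comp toPerm_injective)).toEquiv).symm

instance isPretransitive_permImage [IsPretransitive W X] : IsPretransitive (permImage W e) α :=
  IsPretransitive.of_surjective_map (f := permImageHom W e) e.surjective inferInstance

variable {W} {B : Set X}

theorem isBlock_permImage (hB : IsBlock W B) : IsBlock (permImage W e) (e '' B) :=
  hB.image (permImageHom W e) (MonoidHom.rangeRestrict_surjective _) e.injective

theorem index_fixingSubgroup_permImage (B : Set X) :
    (fixingSubgroup (permImage W e) (e '' B)).index = (fixingSubgroup W B).index :=
  index_fixingSubgroup_image (permImageHom W e) (MonoidHom.rangeRestrict_surjective _)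
    e.injective B

end PermImage

section Wreath

open MulAction RegularWreathProduct

variable {D Q Λ : Type*} [Group D] [Group Q] [MulAction D Λ]

instance isPretransitive_wreath [IsPretransitive D Λ] : IsPretransitive (D ≀ᵣ Q) (Λ × Q) where
  exists_smul_eq x y := by
    obtain ⟨d, hd⟩ := exists_smul_eq D x.1 y.1
    exact ⟨⟨fun _ => d, y.2 * x.2⁻¹⟩, by simp [hd]⟩

theorem isBlock_wreath_fibre (q : Q) : IsBlock (D ≀ᵣ Q) (Prod.snd ⁻¹' {q} : Set (Λ × Q)) :=
  let snd : Λ × Q →ₑ[(rightHom : D ≀ᵣ Q →* Q)] Q := ⟨Prod.snd, fun _ _ => rfl⟩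
  (IsBlock.singleton (a := q)).preimage snd

theorem index_fixingSubgroup_wreath_fibre [FaithfulSMul D Λ] [Nonempty Λ] (q : Q) :
    (fixingSubgroup (D ≀ᵣ Q) (Prod.snd ⁻¹' {q} : Set (Λ × Q))).index =
      Nat.card D * Nat.card Q := by
  let f (w : D ≀ᵣ Q) : D × Q := (w.left (w.right * q), w.right)
  have hf : Function.Surjective f := fun p => ⟨⟨fun _ => p.1, p.2⟩, rfl⟩
  rw [index_eq_card_range (f := f), hf.range_eq, Nat.card_univ, Nat.card_prod]
  intro a b
  have hfaithful : (∀ l : Λ, a.left (a.right * q) • l = b.left (b.right * q) • l) ↔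
      a.left (a.right * q) = b.left (b.right * q) :=
    ⟨FaithfulSMul.eq_of_smul_eq_smul, fun h l => by rw [h]⟩
  rw [inv_mul_mem_fixingSubgroup_iff]
  simp [f, forall_and, hfaithful]

end Wreath

section CyclicWreath

open MulAction

/-- The cyclic group of order `m`, written multiplicatively as `≀ᵣ` requires. -/
abbrev Cyc (m : ℕ) : Type := Multiplicative (ZMod m)

variable (m : ℕ) [NeZero m]

/-- A labelling of the points on which `ℤ_m ≀ ℤ_m` acts by `1, …, m²`. -/
noncomputable def cycProdEquiv : Cyc m × Cyc m ≃ Fin (m ^ 2) :=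
  Finite.equivFinOfCardEq (by simp [sq])

/-- The group `ℤ_m ≀ ℤ_m` as a permutation group of degree `m²`: the paper's example, with the
blocks permuted cyclically. -/
noncomputable def cyclicWreath : Subgroup (Equiv.Perm (Fin (m ^ 2))) :=
  permImage (Cyc m ≀ᵣ Cyc m) (cycProdEquiv m)

instance isPretransitive_cyclicWreath : IsPretransitive (cyclicWreath m) (Fin (m ^ 2)) :=
  isPretransitive_permImage _ _

/-- The block of `cyclicWreath m` formed by the points with second coordinate `1`. -/
def cyclicWreathBlock : Set (Fin (m ^ 2)) :=
  cycProdEquiv m '' (Prod.snd ⁻¹' {1})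

theorem isBlock_cyclicWreathBlock : IsBlock (cyclicWreath m) (cyclicWreathBlock m) :=
  isBlock_permImage _ (isBlock_wreath_fibre 1)

theorem nonempty_cyclicWreathBlock : (cyclicWreathBlock m).Nonempty :=
  .image _ ⟨(1, 1), rfl⟩

theorem card_cyclicWreathBlock : Nat.card (cyclicWreathBlock m) = m := by
  rw [cyclicWreathBlock, Nat.card_image_of_injective (cycProdEquiv m).injective,
    ← Set.univ_prod, Nat.card_coe_set_eq, Set.ncard_prod]
  simp

/-- The translates of `cyclicWreathBlock m`, which are the sets of points with a given second
coordinate. -/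
noncomputable def cyclicWreathPartition : BlockPartition (m ^ 2) (cyclicWreath m) :=
  .ofIsBlock (isBlock_cyclicWreathBlock m) (nonempty_cyclicWreathBlock m)

theorem card_cyclicWreath : Nat.card (cyclicWreath m) = m ^ (m + 1) := by
  rw [cyclicWreath, card_permImage, RegularWreathProduct.card]
  simp [pow_succ]

theorem card_UPt_cyclicWreath :
    Nat.card (UPt (m ^ 2) (cyclicWreath m) (cyclicWreathPartition m).blocks) =
      m ^ (m + 1) + (m ^ 2 + 3) * m ^ 2 := by
  have hindex : (fixingSubgroup (cyclicWreath m) (cyclicWreathBlock m)).index = m ^ 2 := by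
    rw [cyclicWreath, cyclicWreathBlock, index_fixingSubgroup_permImage,
      index_fixingSubgroup_wreath_fibre]
    simp [sq]
  rw [cyclicWreathPartition, UPt.card_of_isBlock, hindex, card_cyclicWreath]

end CyclicWreath

section Limit

open Filter

theorem tendsto_sq_add_three_mul_sq_div_pow :
    Tendsto (fun m : ℕ => (((m : ℝ) ^ 2 + 3) * m ^ 2) / (m : ℝ) ^ (m + 1)) atTop (nhds 0) := by
  refine squeeze_zero' (.of_forall fun m => by positivity) ?_
    (tendsto_const_div_atTop_nhds_zero_nat 4)
  filter_upwards [eventually_ge_atTop 4] with m hm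
  have hm_one : (1 : ℝ) ≤ m := by exact_mod_cast (by omega : 1 ≤ m)
  calc (((m : ℝ) ^ 2 + 3) * m ^ 2) / (m : ℝ) ^ (m + 1)
      ≤ (4 * (m : ℝ) ^ 4) / (m : ℝ) ^ 5 := by
        gcongr ?_ / ?_
        · nlinarith [one_le_pow₀ hm_one (n := 2)]
        · exact pow_le_pow_right₀ hm_one (by omega)
    _ = 4 / (m : ℝ) := by field_simp

theorem tendsto_card_UPt_cyclicWreath_div_card :
    Tendsto (fun k : ℕ => (Nat.card (UPt ((k + 2) ^ 2) (cyclicWreath (k + 2))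
      (cyclicWreathPartition (k + 2)).blocks) : ℝ) / (Nat.card (cyclicWreath (k + 2)) : ℝ))
      atTop (nhds 1) := by
  have hlim := ((tendsto_add_atTop_iff_nat 2).2 tendsto_sq_add_three_mul_sq_div_pow).const_add 1
  rw [add_zero] at hlim
  refine hlim.congr fun k => ?_
  rw [card_UPt_cyclicWreath, card_cyclicWreath]
  push_cast
  rw [add_div, div_self (by positivity)]

end Limit

/-- There is a sequence of finite transitive imprimitive permutation groups
`G_k` (on `n_k` points), with nontrivial block partitions `𝓑_k`, such that `|G_k| → ∞` and
`|U_{G_k⋌𝓑_k}| / |G_k| → 1` as `k → ∞`. -/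
theorem compact_representation_sequence :
    ∃ (nk : ℕ → ℕ) (Gk : ∀ k : ℕ, Subgroup (Equiv.Perm (Fin (nk k))))
      (Pk : ∀ k : ℕ, BlockPartition (nk k) (Gk k)),
      (∀ k, ∀ a b : Fin (nk k), ∃ σ ∈ Gk k, (σ : Equiv.Perm (Fin (nk k))) a = b) ∧
      (∀ k, ∃ B ∈ (Pk k).blocks, Nat.card B ≠ 1 ∧ Nat.card B ≠ nk k) ∧
      Filter.Tendsto (fun k => Nat.card (Gk k)) Filter.atTop Filter.atTop ∧
      Filter.Tendsto
        (fun k => (Nat.card (UPt (nk k) (Gk k) (Pk k).blocks) : ℝ) / (Nat.card (Gk k) : ℝ))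
        Filter.atTop (nhds 1) := by
  refine ⟨fun k => (k + 2) ^ 2, fun k => cyclicWreath (k + 2),
    fun k => cyclicWreathPartition (k + 2), fun k a b => ?_, fun k => ?_, ?_,
    tendsto_card_UPt_cyclicWreath_div_card⟩
  · obtain ⟨σ, hσ⟩ := MulAction.exists_smul_eq (cyclicWreath (k + 2)) a b
    exact ⟨σ, σ.2, hσ⟩
  · refine ⟨cyclicWreathBlock (k + 2), BlockPartition.mem_blocks_ofIsBlock _ _, ?_⟩
    rw [card_cyclicWreathBlock]
    exact ⟨by omega, (lt_self_pow₀ (by omega) one_lt_two).ne⟩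
  · refine Filter.tendsto_atTop_mono (fun k => ?_) Filter.tendsto_id
    calc k ≤ k + 2 := by omega
      _ ≤ (k + 2) ^ (k + 2 + 1) := Nat.le_self_pow (by omega) _
      _ = Nat.card (cyclicWreath (k + 2)) := (card_cyclicWreath _).symm
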